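/- (Davis–Kahan sin Θ bound, variant of Yu–Wang–Samworth.) Let Σ, Σ̂ ∈ ℝ^{p×p} be symmetric matrices with eigenvalues λ_1 ≥ … ≥ λ_p and λ̂_1 ≥ … ≥ λ̂_p respectively. Fix 1 ≤ r ≤ s ≤ p, set λ_0 := +∞ and λ_{p+1} := −∞, and assume min(λ_{r−1} − λ_r, λ_s − λ_{s+1}) > 0. Let m := s − r + 1. Let v_r, …, v_s be orthonormal vectors with Σ v_j = λ_j v_j, and let v̂_1, …, v̂_p be an orthonormal eigenbasis of Σ̂ with Σ̂ v̂_j = λ̂_j v̂_j. Let V = (v_r, …, v_s) ∈ ℝ^{p×m} and let V̂_1 = (v̂_1, …, v̂_{r−1}, v̂_{s+1}, …, v̂_p) ∈ ℝ^{p×(p−m)}. Then ‖V̂_1ᵀ V‖ ≤ 2 · min( m^{1/2} ‖Σ̂ − Σ‖_op , ‖Σ̂ − Σ‖ ) / min(λ_{r−1} − λ_r, λ_s − λ_{s+1}), where ‖·‖ is the Frobenius norm and ‖·‖_op the operator (spectral) norm. -/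

import Mathlib

open Matrix

/-- Frobenius norm of a real matrix. -/
noncomputable def frobNormR {p q : ℕ} (M : Matrix (Fin p) (Fin q) ℝ) : ℝ :=
  Real.sqrt (∑ i, ∑ j, (M i j) ^ 2)

/-- Operator (spectral) norm of a real matrix, as the norm of the induced
linear map between Euclidean spaces. -/
noncomputable def opNormR {p : ℕ} (M : Matrix (Fin p) (Fin p) ℝ) : ℝ :=
  ‖LinearMap.toContinuousLinearMap (Matrix.toEuclideanLin M)‖

/-!
Let `b`, `c` be orthonormal eigenbases of `T`, `S`, with eigenvalues `lam`, `mu` in the same order.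
The matrix `W j k = ‖⟪b j, c k⟫‖ ^ 2` is doubly stochastic, and by Parseval
`‖(S - T) (b j)‖ ^ 2 = ∑ k, (lam j - mu k) ^ 2 * W j k`.
For `j ∈ I` and `k ∉ I` the gap gives
`δ ^ 2 ≤ (lam j - lam k) ^ 2 ≤ 2 * (lam k - mu k) ^ 2 + 2 * (lam j - mu k) ^ 2`. Weighting by
`W j k` and summing over `j ∈ I`, `k ∉ I`, the second term contributes at most
`2 * ∑ j ∈ I, ‖(S - T) (b j)‖ ^ 2`, and the first is controlled by Weyl's inequality (operator norm)
or by the Hoffman–Wielandt inequality (Frobenius norm).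
-/

section DoublyStochastic

variable {ι R : Type*} [Fintype ι] [Field R] [LinearOrder R] [IsStrictOrderedRing R]

theorem sum_sq_sub_le_sum_sq_sub_comp_perm {f g : ι → R} (hfg : Monovary f g)
    (σ : Equiv.Perm ι) : ∑ i, (f i - g i) ^ 2 ≤ ∑ i, (f i - g (σ i)) ^ 2 := by
  have hrearr : ∑ i, f i * g (σ i) ≤ ∑ i, f i * g i := hfg.sum_mul_comp_perm_le_sum_mul
  have hsq : ∑ i, g (σ i) ^ 2 = ∑ i, g i ^ 2 := Equiv.sum_comp σ fun i => g i ^ 2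
  simp only [sub_sq, Finset.sum_add_distrib, Finset.sum_sub_distrib, mul_assoc,
    ← Finset.mul_sum, hsq]
  linarith

theorem sum_sq_sub_le_of_mem_doublyStochastic [DecidableEq ι] {f g : ι → R} (hfg : Monovary f g)
    {W : Matrix ι ι R} (hW : W ∈ doublyStochastic R ι) :
    ∑ i, (f i - g i) ^ 2 ≤ ∑ i, ∑ j, (f i - g j) ^ 2 * W i j := by
  obtain ⟨w, hw_nonneg, hw_sum, rfl⟩ := exists_eq_sum_perm_of_mem_doublyStochastic hW
  calc ∑ i, (f i - g i) ^ 2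
      = ∑ σ, w σ * ∑ i, (f i - g i) ^ 2 := by rw [← Finset.sum_mul, hw_sum, one_mul]
    _ ≤ ∑ σ, w σ * ∑ i, (f i - g (σ i)) ^ 2 := by
        refine Finset.sum_le_sum fun σ _ => mul_le_mul_of_nonneg_left ?_ (hw_nonneg σ)
        exact sum_sq_sub_le_sum_sq_sub_comp_perm hfg σ
    _ = ∑ i, ∑ σ, w σ * (f i - g (σ i)) ^ 2 := by
        simp only [Finset.mul_sum]
        exact Finset.sum_comm
    _ = ∑ i, ∑ j, (f i - g j) ^ 2 * (∑ σ, w σ • σ.permMatrix R) i j := by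
        refine Finset.sum_congr rfl fun i _ => ?_
        simp only [Matrix.sum_apply, Matrix.smul_apply, Finset.mul_sum]
        rw [Finset.sum_comm]
        simp [PEquiv.toMatrix_apply, mul_comm]

end DoublyStochastic

section Eigenbasis

open scoped InnerProductSpace

variable {𝕜 E ι κ : Type*} [RCLike 𝕜] [NormedAddCommGroup E] [InnerProductSpace 𝕜 E]
  [Fintype ι] [Fintype κ]

theorem exists_orthonormalBasis_coe_eq [FiniteDimensional 𝕜 E] {v : ι → E} (hv : Orthonormal 𝕜 v)
    (hcard : Fintype.card ι = Module.finrank 𝕜 E) :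
    ∃ b : OrthonormalBasis ι 𝕜 E, ⇑b = v := by
  obtain ⟨b, hb⟩ := Orthonormal.exists_orthonormalBasis_extension_of_card_eq hcard.symm
    (s := Set.univ) (hv.comp _ Subtype.val_injective)
  exact ⟨b, funext fun i => hb i (Set.mem_univ i)⟩

theorem orthonormal_piecewise {α : Type*} [DecidableEq α] {I : Finset α} {u v : α → E}
    (hu : Orthonormal 𝕜 u) (hv : Orthonormal 𝕜 fun k : I => v k)
    (hvu : ∀ j ∈ I, ∀ k ∉ I, ⟪v j, u k⟫_𝕜 = 0) : Orthonormal 𝕜 (I.piecewise v u) := by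
  have hv_ite := orthonormal_iff_ite.mp hv
  refine orthonormal_iff_ite.mpr fun i j => ?_
  by_cases hi : i ∈ I <;> by_cases hj : j ∈ I
  · simpa [hi, hj] using hv_ite ⟨i, hi⟩ ⟨j, hj⟩
  · simp [hi, hj, hvu i hi j hj, ne_of_mem_of_not_mem hi hj]
  · simp [hi, hj, inner_eq_zero_symm.mp (hvu j hj i hi), (ne_of_mem_of_not_mem hj hi).symm]
  · simp [hi, hj, orthonormal_iff_ite.mp hu i j]

theorem exists_ne_zero_forall_inner_eq_zero (w : κ → E)
    (hcard : Fintype.card κ < Module.finrank 𝕜 E) : ∃ x ≠ 0, ∀ i, ⟪w i, x⟫_𝕜 = 0 := by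
  have := Module.finite_of_finrank_pos (Nat.zero_lt_of_lt hcard)
  let f : E →ₗ[𝕜] κ → 𝕜 := LinearMap.pi fun i => innerₛₗ 𝕜 (w i)
  have hker : LinearMap.ker f ≠ ⊥ := LinearMap.ker_ne_bot_of_finrank_lt (by simpa using hcard)
  obtain ⟨x, hx, hx_ne⟩ := (Submodule.ne_bot_iff _).mp hker
  exact ⟨x, hx_ne, congrFun hx⟩

theorem sum_sq_norm_apply_eq_sum_sq_norm_adjoint_apply [CompleteSpace E] (A : E →L[𝕜] E)
    (b : OrthonormalBasis ι 𝕜 E) (e : OrthonormalBasis κ 𝕜 E) :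
    ∑ i, ‖A (b i)‖ ^ 2 = ∑ j, ‖A.adjoint (e j)‖ ^ 2 := by
  calc ∑ i, ‖A (b i)‖ ^ 2 = ∑ i, ∑ j, ‖⟪e j, A (b i)⟫_𝕜‖ ^ 2 := by
        simp only [e.sum_sq_norm_inner_right]
    _ = ∑ j, ∑ i, ‖⟪A.adjoint (e j), b i⟫_𝕜‖ ^ 2 := by
        simp only [A.adjoint_inner_left]
        exact Finset.sum_comm
    _ = ∑ j, ‖A.adjoint (e j)‖ ^ 2 := by simp only [b.sum_sq_norm_inner_left]

theorem sum_sq_norm_apply_eq (A : E →L[𝕜] E) (b : OrthonormalBasis ι 𝕜 E)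
    (e : OrthonormalBasis κ 𝕜 E) : ∑ i, ‖A (b i)‖ ^ 2 = ∑ j, ‖A (e j)‖ ^ 2 := by
  have := b.toBasis.finiteDimensional_of_finite
  have := FiniteDimensional.complete 𝕜 E
  rw [sum_sq_norm_apply_eq_sum_sq_norm_adjoint_apply A b e,
    ← sum_sq_norm_apply_eq_sum_sq_norm_adjoint_apply A e e]

theorem sq_norm_inner_mem_doublyStochastic [DecidableEq ι] (b c : OrthonormalBasis ι 𝕜 E) :
    Matrix.of (fun j k => ‖⟪b j, c k⟫_𝕜‖ ^ 2) ∈ doublyStochastic ℝ ι := by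
  refine mem_doublyStochastic_iff_sum.mpr ⟨fun j k => sq_nonneg _, fun j => ?_, fun k => ?_⟩
  · simp [c.sum_sq_norm_inner_left]
  · simp [b.sum_sq_norm_inner_right]

variable {T S : E →L[𝕜] E} {b c : OrthonormalBasis ι 𝕜 E} {lam mu : ι → ℝ}

theorem inner_eigenbasis_apply (hb : ∀ j, T (b j) = (lam j : 𝕜) • b j) (j : ι) (x : E) :
    ⟪b j, T x⟫_𝕜 = lam j * ⟪b j, x⟫_𝕜 := by
  classical
  conv_lhs => rw [← b.sum_repr' x]
  simp [map_sum, hb, inner_sum, inner_smul_right, b.inner_eq_ite, mul_comm]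

theorem exists_eigenbasis_extension (hb : ∀ j, T (b j) = (lam j : 𝕜) • b j)
    {I : Finset ι} {v : ι → E} (hv : Orthonormal 𝕜 fun k : I => v k)
    (hv_eig : ∀ j ∈ I, T (v j) = (lam j : 𝕜) • v j) (hne : ∀ j ∈ I, ∀ k ∉ I, lam j ≠ lam k) :
    ∃ b' : OrthonormalBasis ι 𝕜 E,
      (∀ j ∈ I, b' j = v j) ∧ ∀ j, T (b' j) = (lam j : 𝕜) • b' j := by
  classical
  have := b.toBasis.finiteDimensional_of_finite
  have hvb : ∀ j ∈ I, ∀ k ∉ I, ⟪v j, b k⟫_𝕜 = 0 := fun j hj k hk => by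
    have heig : (lam j : 𝕜) * ⟪b k, v j⟫_𝕜 = lam k * ⟪b k, v j⟫_𝕜 := by
      rw [← inner_eigenbasis_apply hb, hv_eig j hj, inner_smul_right]
    refine inner_eq_zero_symm.mp ((mul_eq_mul_right_iff.mp heig).resolve_left fun h => ?_)
    exact hne j hj k hk (RCLike.ofReal_injective h)
  obtain ⟨b', hb'⟩ := exists_orthonormalBasis_coe_eq (orthonormal_piecewise b.orthonormal hv hvb)
    (Module.finrank_eq_card_basis b.toBasis).symm
  refine ⟨b', fun j hj => by simp [hb', hj], fun j => ?_⟩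
  by_cases hj : j ∈ I
  · simpa [hb', hj] using hv_eig j hj
  · simpa [hb', hj] using hb j

theorem re_inner_apply_self_eq_sum (hb : ∀ j, T (b j) = (lam j : 𝕜) • b j) (x : E) :
    RCLike.re ⟪x, T x⟫_𝕜 = ∑ j, lam j * ‖⟪b j, x⟫_𝕜‖ ^ 2 := by
  rw [← b.sum_inner_mul_inner x (T x), map_sum]
  refine Finset.sum_congr rfl fun j _ => ?_
  rw [inner_eigenbasis_apply hb, mul_left_comm, RCLike.re_ofReal_mul, inner_mul_symm_re_eq_norm,
    norm_mul, norm_inner_symm x, sq]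

theorem re_inner_apply_self_le (hb : ∀ j, T (b j) = (lam j : 𝕜) • b j) {a : ℝ} {x : E}
    (hx : ∀ j, a < lam j → ⟪b j, x⟫_𝕜 = 0) : RCLike.re ⟪x, T x⟫_𝕜 ≤ a * ‖x‖ ^ 2 := by
  rw [re_inner_apply_self_eq_sum hb, ← b.sum_sq_norm_inner_right x, Finset.mul_sum]
  refine Finset.sum_le_sum fun j _ => ?_
  rcases lt_or_ge a (lam j) with hj | hj
  · simp [hx j hj]
  · gcongr

theorem le_re_inner_apply_self (hb : ∀ j, T (b j) = (lam j : 𝕜) • b j) {a : ℝ} {x : E}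
    (hx : ∀ j, lam j < a → ⟪b j, x⟫_𝕜 = 0) : a * ‖x‖ ^ 2 ≤ RCLike.re ⟪x, T x⟫_𝕜 := by
  have hneg := re_inner_apply_self_le (T := -T) (b := b) (lam := -lam) (a := -a) (x := x)
    (by simp [hb]) (by simpa using hx)
  simpa using hneg

theorem eigenvalue_le_add_norm_sub (hlm : Monovary lam mu)
    (hb : ∀ j, T (b j) = (lam j : 𝕜) • b j) (hc : ∀ j, S (c j) = (mu j : 𝕜) • c j) (k : ι) :
    mu k ≤ lam k + ‖S - T‖ := by
  classical
  -- Since `lam k < lam j` forces `mu k ≤ mu j`, one condition for each `j ≠ k` makes `x` orthogonal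
  -- to every `b j` with `lam k < lam j` and every `c j` with `mu j < mu k`.
  obtain ⟨x, hx_ne, hx⟩ := exists_ne_zero_forall_inner_eq_zero (𝕜 := 𝕜)
    (fun j : {j // j ≠ k} => if lam k < lam j then b j else c j) (by
      rw [Module.finrank_eq_card_basis b.toBasis]
      exact Fintype.card_subtype_lt (x := k) (by simp))
  have hT : RCLike.re ⟪x, T x⟫_𝕜 ≤ lam k * ‖x‖ ^ 2 := by
    refine re_inner_apply_self_le hb fun j hj => ?_
    simpa [hj] using hx ⟨j, by rintro rfl; exact hj.false⟩
  have hS : mu k * ‖x‖ ^ 2 ≤ RCLike.re ⟪x, S x⟫_𝕜 := by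
    refine le_re_inner_apply_self hc fun j hj => ?_
    simpa [(hlm hj).not_gt] using hx ⟨j, by rintro rfl; exact hj.false⟩
  have hST : RCLike.re ⟪x, (S - T) x⟫_𝕜 ≤ ‖S - T‖ * ‖x‖ ^ 2 :=
    calc RCLike.re ⟪x, (S - T) x⟫_𝕜 ≤ ‖x‖ * ‖(S - T) x‖ := re_inner_le_norm _ _
      _ ≤ ‖x‖ * (‖S - T‖ * ‖x‖) := by gcongr; exact (S - T).le_opNorm x
      _ = ‖S - T‖ * ‖x‖ ^ 2 := by ring
  rw [_root_.sub_apply, inner_sub_right, map_sub] at hST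
  refine le_of_mul_le_mul_right ?_ (show 0 < ‖x‖ ^ 2 by positivity)
  linarith

theorem abs_eigenvalue_sub_le_norm_sub (hlm : Monovary lam mu)
    (hb : ∀ j, T (b j) = (lam j : 𝕜) • b j) (hc : ∀ j, S (c j) = (mu j : 𝕜) • c j) (k : ι) :
    |lam k - mu k| ≤ ‖S - T‖ := by
  have hmu := eigenvalue_le_add_norm_sub hlm hb hc k
  have hlam := eigenvalue_le_add_norm_sub hlm.symm hc hb k
  rw [norm_sub_rev] at hlam
  exact abs_le.mpr ⟨by linarith, by linarith⟩

theorem sq_norm_sub_apply_eq_sum (hb : ∀ j, T (b j) = (lam j : 𝕜) • b j)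
    (hc : ∀ j, S (c j) = (mu j : 𝕜) • c j) (j : ι) :
    ‖(S - T) (b j)‖ ^ 2 = ∑ k, (lam j - mu k) ^ 2 * ‖⟪b j, c k⟫_𝕜‖ ^ 2 := by
  rw [← c.sum_sq_norm_inner_right]
  refine Finset.sum_congr rfl fun k _ => ?_
  have hinner : ⟪c k, (S - T) (b j)⟫_𝕜 = ((mu k - lam j : ℝ) : 𝕜) * ⟪c k, b j⟫_𝕜 := by
    rw [_root_.sub_apply, inner_sub_right, inner_eigenbasis_apply hc, hb,
      inner_smul_right, ← sub_mul, RCLike.ofReal_sub]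
  rw [hinner, norm_mul, mul_pow, RCLike.norm_ofReal, sq_abs, norm_inner_symm, ← neg_sub, neg_sq]

theorem sum_sq_eigenvalue_sub_le (hlm : Monovary lam mu)
    (hb : ∀ j, T (b j) = (lam j : 𝕜) • b j) (hc : ∀ j, S (c j) = (mu j : 𝕜) • c j) :
    ∑ j, (lam j - mu j) ^ 2 ≤ ∑ j, ‖(S - T) (b j)‖ ^ 2 := by
  classical
  simpa only [sq_norm_sub_apply_eq_sum hb hc, Matrix.of_apply] using
    sum_sq_sub_le_of_mem_doublyStochastic hlm (sq_norm_inner_mem_doublyStochastic b c)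

theorem sq_gap_mul_sum_sq_norm_inner_le [DecidableEq ι]
    (hb : ∀ j, T (b j) = (lam j : 𝕜) • b j)
    (hc : ∀ j, S (c j) = (mu j : 𝕜) • c j) {I : Finset ι} {δ : ℝ} (hδ : 0 ≤ δ)
    (hgap : ∀ j ∈ I, ∀ k ∉ I, δ ≤ |lam j - lam k|) :
    δ ^ 2 * ∑ j ∈ I, ∑ k ∈ Iᶜ, ‖⟪b j, c k⟫_𝕜‖ ^ 2 ≤
      2 * (∑ j ∈ I, ∑ k, (lam k - mu k) ^ 2 * ‖⟪b j, c k⟫_𝕜‖ ^ 2) +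
        2 * ∑ j ∈ I, ‖(S - T) (b j)‖ ^ 2 := by
  have hterm : ∀ j ∈ I, ∀ k ∈ Iᶜ,
      δ ^ 2 ≤ 2 * (lam k - mu k) ^ 2 + 2 * (lam j - mu k) ^ 2 := fun j hj k hk =>
    calc δ ^ 2 ≤ |lam j - lam k| ^ 2 := by
          gcongr; exact hgap j hj k (Finset.mem_compl.mp hk)
      _ = ((lam j - mu k) - (lam k - mu k)) ^ 2 := by rw [sq_abs]; ring
      _ ≤ 2 * (lam k - mu k) ^ 2 + 2 * (lam j - mu k) ^ 2 := by
          linarith [sq_nonneg ((lam j - mu k) + (lam k - mu k))]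
  simp only [sq_norm_sub_apply_eq_sum hb hc, Finset.mul_sum, ← Finset.sum_add_distrib]
  refine Finset.sum_le_sum fun j hj => ?_
  calc ∑ k ∈ Iᶜ, δ ^ 2 * ‖⟪b j, c k⟫_𝕜‖ ^ 2
      ≤ ∑ k ∈ Iᶜ, (2 * (lam k - mu k) ^ 2 + 2 * (lam j - mu k) ^ 2) * ‖⟪b j, c k⟫_𝕜‖ ^ 2 := by
        gcongr with k hk
        exact hterm j hj k hk
    _ ≤ ∑ k, (2 * (lam k - mu k) ^ 2 + 2 * (lam j - mu k) ^ 2) * ‖⟪b j, c k⟫_𝕜‖ ^ 2 :=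
        Finset.sum_le_univ_sum_of_nonneg fun k => by positivity
    _ = _ := Finset.sum_congr rfl fun k _ => by ring

theorem sum_sum_sq_eigenvalue_sub_mul_le_card_mul (hlm : Monovary lam mu)
    (hb : ∀ j, T (b j) = (lam j : 𝕜) • b j) (hc : ∀ j, S (c j) = (mu j : 𝕜) • c j)
    (I : Finset ι) :
    ∑ j ∈ I, ∑ k, (lam k - mu k) ^ 2 * ‖⟪b j, c k⟫_𝕜‖ ^ 2 ≤ I.card * ‖S - T‖ ^ 2 := by
  rw [← nsmul_eq_mul]
  refine Finset.sum_le_card_nsmul _ _ _ fun j _ => ?_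
  calc ∑ k, (lam k - mu k) ^ 2 * ‖⟪b j, c k⟫_𝕜‖ ^ 2
      ≤ ∑ k, ‖S - T‖ ^ 2 * ‖⟪b j, c k⟫_𝕜‖ ^ 2 := by
        gcongr ∑ k, ?_ * _ with k
        exact sq_le_sq' (abs_le.mp (abs_eigenvalue_sub_le_norm_sub hlm hb hc k)).1
          (abs_le.mp (abs_eigenvalue_sub_le_norm_sub hlm hb hc k)).2
    _ = ‖S - T‖ ^ 2 := by
        rw [← Finset.mul_sum, c.sum_sq_norm_inner_left, b.norm_eq_one, one_pow, mul_one]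

theorem sum_sum_sq_eigenvalue_sub_mul_le_sum (hlm : Monovary lam mu)
    (hb : ∀ j, T (b j) = (lam j : 𝕜) • b j) (hc : ∀ j, S (c j) = (mu j : 𝕜) • c j)
    (I : Finset ι) :
    ∑ j ∈ I, ∑ k, (lam k - mu k) ^ 2 * ‖⟪b j, c k⟫_𝕜‖ ^ 2 ≤ ∑ j, ‖(S - T) (b j)‖ ^ 2 :=
  calc ∑ j ∈ I, ∑ k, (lam k - mu k) ^ 2 * ‖⟪b j, c k⟫_𝕜‖ ^ 2
      ≤ ∑ j, ∑ k, (lam k - mu k) ^ 2 * ‖⟪b j, c k⟫_𝕜‖ ^ 2 :=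
        Finset.sum_le_univ_sum_of_nonneg fun j => by positivity
    _ = ∑ k, (lam k - mu k) ^ 2 := by
        rw [Finset.sum_comm]
        simp [← Finset.mul_sum, b.sum_sq_norm_inner_right, c.norm_eq_one]
    _ ≤ ∑ j, ‖(S - T) (b j)‖ ^ 2 := sum_sq_eigenvalue_sub_le hlm hb hc

theorem sum_sq_norm_apply_le_card_mul (A : E →L[𝕜] E) (b : OrthonormalBasis ι 𝕜 E)
    (I : Finset ι) : ∑ j ∈ I, ‖A (b j)‖ ^ 2 ≤ I.card * ‖A‖ ^ 2 := by
  rw [← nsmul_eq_mul]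
  refine Finset.sum_le_card_nsmul _ _ _ fun j _ => ?_
  gcongr
  exact A.unit_le_opNorm _ (b.norm_eq_one j).le

theorem sq_gap_mul_sum_sq_norm_inner_le_norm [DecidableEq ι] (hlm : Monovary lam mu)
    (hb : ∀ j, T (b j) = (lam j : 𝕜) • b j) (hc : ∀ j, S (c j) = (mu j : 𝕜) • c j)
    {I : Finset ι} {δ : ℝ} (hδ : 0 ≤ δ) (hgap : ∀ j ∈ I, ∀ k ∉ I, δ ≤ |lam j - lam k|) :
    δ ^ 2 * ∑ j ∈ I, ∑ k ∈ Iᶜ, ‖⟪b j, c k⟫_𝕜‖ ^ 2 ≤ 4 * (I.card * ‖S - T‖ ^ 2) := by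
  have hgap_le := sq_gap_mul_sum_sq_norm_inner_le hb hc hδ hgap
  have hweyl := sum_sum_sq_eigenvalue_sub_mul_le_card_mul hlm hb hc I
  have hcols := sum_sq_norm_apply_le_card_mul (S - T) b I
  linarith

theorem sq_gap_mul_sum_sq_norm_inner_le_sum [DecidableEq ι] (hlm : Monovary lam mu)
    (hb : ∀ j, T (b j) = (lam j : 𝕜) • b j) (hc : ∀ j, S (c j) = (mu j : 𝕜) • c j)
    {I : Finset ι} {δ : ℝ} (hδ : 0 ≤ δ) (hgap : ∀ j ∈ I, ∀ k ∉ I, δ ≤ |lam j - lam k|) :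
    δ ^ 2 * ∑ j ∈ I, ∑ k ∈ Iᶜ, ‖⟪b j, c k⟫_𝕜‖ ^ 2 ≤ 4 * ∑ j, ‖(S - T) (b j)‖ ^ 2 := by
  have hgap_le := sq_gap_mul_sum_sq_norm_inner_le hb hc hδ hgap
  have hhoffman := sum_sum_sq_eigenvalue_sub_mul_le_sum hlm hb hc I
  have hcols : ∑ j ∈ I, ‖(S - T) (b j)‖ ^ 2 ≤ ∑ j, ‖(S - T) (b j)‖ ^ 2 :=
    Finset.sum_le_univ_sum_of_nonneg fun j => sq_nonneg _
  linarith

theorem sqrt_le_two_mul_sqrt_div {δ x y : ℝ} (hδ : 0 < δ) (h : δ ^ 2 * x ≤ 4 * y) :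
    √x ≤ 2 * √y / δ := by
  rw [le_div_iff₀ hδ, mul_comm]
  calc δ * √x = √(δ ^ 2 * x) := by rw [Real.sqrt_mul (sq_nonneg δ), Real.sqrt_sq hδ.le]
    _ ≤ √(2 ^ 2 * y) := Real.sqrt_le_sqrt (by linarith)
    _ = 2 * √y := by rw [Real.sqrt_mul (by norm_num), Real.sqrt_sq (by norm_num)]

theorem sqrt_sum_sq_norm_inner_eigenbasis_le [DecidableEq ι] (hlm : Monovary lam mu)
    (hb : ∀ j, T (b j) = (lam j : 𝕜) • b j) (hc : ∀ j, S (c j) = (mu j : 𝕜) • c j)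
    {I : Finset ι} {δ : ℝ} (hδ : 0 < δ) (hgap : ∀ j ∈ I, ∀ k ∉ I, δ ≤ |lam j - lam k|)
    (e : OrthonormalBasis κ 𝕜 E) :
    √(∑ j ∈ I, ∑ k ∈ Iᶜ, ‖⟪b j, c k⟫_𝕜‖ ^ 2) ≤
      2 * min (√I.card * ‖S - T‖) √(∑ i, ‖(S - T) (e i)‖ ^ 2) / δ := by
  rcases min_choice (√I.card * ‖S - T‖) √(∑ i, ‖(S - T) (e i)‖ ^ 2) with hmin | hmin <;> rw [hmin]
  · have hop := sqrt_le_two_mul_sqrt_div hδ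
      (sq_gap_mul_sum_sq_norm_inner_le_norm hlm hb hc hδ.le hgap)
    rwa [Real.sqrt_mul (Nat.cast_nonneg _), Real.sqrt_sq (norm_nonneg _)] at hop
  · rw [← sum_sq_norm_apply_eq (S - T) b e]
    exact sqrt_le_two_mul_sqrt_div hδ (sq_gap_mul_sum_sq_norm_inner_le_sum hlm hb hc hδ.le hgap)

theorem sum_sdiff_sum_eq_sum_subtype {α M : Type*} [DecidableEq α] [AddCommMonoid M]
    {s t : Finset α} (hst : s ⊆ t) (f : α → α → M) :
    ∑ j ∈ t \ s, ∑ k ∈ s, f j k =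
      ∑ j ∈ (s.subtype (· ∈ t))ᶜ, ∑ k ∈ s.subtype (· ∈ t), f j k := by
  have hcompl : (s.subtype (· ∈ t))ᶜ = (t \ s).subtype (· ∈ t) := by
    ext j
    simp
  simp only [hcompl, Finset.sum_subtype_of_mem _ hst]
  exact (Finset.sum_subtype_of_mem _ fun j hj => (Finset.mem_sdiff.mp hj).1).symm

theorem stmt3_general {α : Type*} [DecidableEq α] (T S : E →L[𝕜] E)
    (t I : Finset α) (ht : t.card = Module.finrank 𝕜 E) (hI : I ⊆ t)
    (lam mu : α → ℝ) (hlm : MonovaryOn lam mu t) (u v w : α → E)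
    (hu : Orthonormal 𝕜 fun j : t => u j) (hu_eig : ∀ j ∈ t, T (u j) = (lam j : 𝕜) • u j)
    (hw : Orthonormal 𝕜 fun j : t => w j) (hw_eig : ∀ j ∈ t, S (w j) = (mu j : 𝕜) • w j)
    (hv : Orthonormal 𝕜 fun j : I => v j) (hv_eig : ∀ j ∈ I, T (v j) = (lam j : 𝕜) • v j)
    (δ : ℝ) (hδ : 0 < δ) (hgap : ∀ j ∈ I, ∀ k ∈ t \ I, δ ≤ |lam j - lam k|)
    (e : OrthonormalBasis κ 𝕜 E) :
    √(∑ k ∈ t \ I, ∑ j ∈ I, ‖⟪w k, v j⟫_𝕜‖ ^ 2) ≤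
      2 * min (√I.card * ‖S - T‖) √(∑ i, ‖(S - T) (e i)‖ ^ 2) / δ := by
  have := e.toBasis.finiteDimensional_of_finite
  let J : Finset t := I.subtype (· ∈ t)
  have hJ_mem : ∀ {j}, j ∈ J ↔ j.1 ∈ I := Finset.mem_subtype
  have hJ_card : J.card = I.card := by
    rw [Finset.card_subtype, Finset.filter_true_of_mem hI]
  have hJ_gap : ∀ j ∈ J, ∀ k ∉ J, δ ≤ |lam j - lam k| := fun j hj k hk =>
    hgap j (hJ_mem.mp hj) k (Finset.mem_sdiff.mpr ⟨k.2, mt hJ_mem.mpr hk⟩)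
  have hJ_orth : Orthonormal 𝕜 fun j : J => v j :=
    hv.comp (fun j : J => (⟨j, hJ_mem.mp j.2⟩ : I)) fun _ _ hij =>
      Subtype.ext (Subtype.ext (Subtype.mk.inj hij))
  obtain ⟨b, hb⟩ := exists_orthonormalBasis_coe_eq hu (by simpa using ht)
  obtain ⟨c, hc⟩ := exists_orthonormalBasis_coe_eq hw (by simpa using ht)
  have hc_eig : ∀ j, S (c j) = (mu j : 𝕜) • c j := fun j => by simpa [hc] using hw_eig j j.2
  obtain ⟨b', hb'v, hb'_eig⟩ := exists_eigenbasis_extension (T := T) (b := b)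
    (lam := fun j => lam j) (v := fun j => v j) (fun j => by simpa [hb] using hu_eig j j.2)
    hJ_orth (fun j hj => hv_eig j (hJ_mem.mp hj))
    fun j hj k hk heq => by simpa [heq, hδ.not_ge] using hJ_gap j hj k hk
  have hsum : ∑ k ∈ t \ I, ∑ j ∈ I, ‖⟪w k, v j⟫_𝕜‖ ^ 2 =
      ∑ j ∈ J, ∑ k ∈ Jᶜ, ‖⟪b' j, c k⟫_𝕜‖ ^ 2 := by
    rw [sum_sdiff_sum_eq_sum_subtype hI, Finset.sum_comm]
    refine Finset.sum_congr rfl fun j hj => Finset.sum_congr rfl fun k _ => ?_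
    rw [hb'v j hj, hc, norm_inner_symm]
  rw [hsum, ← hJ_card]
  exact sqrt_sum_sq_norm_inner_eigenbasis_le (monovaryOn_iff_monovary.mp hlm) hb'_eig hc_eig hδ
    hJ_gap e

end Eigenbasis

section Matrix

variable {n κ : Type*} [Fintype n]

theorem orthonormal_toLp [DecidableEq κ] {s : Finset κ} {u : κ → n → ℝ}
    (hu : ∀ i ∈ s, ∀ j ∈ s, u i ⬝ᵥ u j = if i = j then 1 else 0) :
    Orthonormal ℝ fun i : s => WithLp.toLp 2 (u i) := by
  refine orthonormal_iff_ite.mpr fun i j => ?_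
  rw [EuclideanSpace.inner_toLp_toLp, star_trivial, dotProduct_comm, hu i i.2 j j.2]
  simp only [Subtype.ext_iff]

theorem toEuclideanCLM_toLp_eq_smul [DecidableEq n] {A : Matrix n n ℝ} {x : n → ℝ} {a : ℝ}
    (h : A *ᵥ x = a • x) :
    Matrix.toEuclideanCLM (𝕜 := ℝ) A (WithLp.toLp 2 x) = (a : ℝ) • WithLp.toLp 2 x := by
  rw [Matrix.toEuclideanCLM_toLp, h, WithLp.toLp_smul]

theorem opNormR_eq_norm_toEuclideanCLM {p : ℕ} (M : Matrix (Fin p) (Fin p) ℝ) :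
    opNormR M = ‖Matrix.toEuclideanCLM (𝕜 := ℝ) M‖ := rfl

theorem frobNormR_eq_sqrt_sum_sq_norm {p : ℕ} (M : Matrix (Fin p) (Fin p) ℝ) :
    frobNormR M =
      √(∑ j, ‖Matrix.toEuclideanCLM (𝕜 := ℝ) M (EuclideanSpace.basisFun (Fin p) ℝ j)‖ ^ 2) := by
  rw [frobNormR, Finset.sum_comm]
  simp [EuclideanSpace.real_norm_sq_eq]

end Matrix

theorem le_abs_sub_of_antitoneOn {lam : ℕ → ℝ} {p r s : ℕ} {δ : ℝ}
    (hlam : AntitoneOn lam (Finset.Icc 1 p)) (hr : 1 ≤ r) (hsp : s ≤ p)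
    (hgapL : 2 ≤ r → δ ≤ lam (r - 1) - lam r) (hgapR : s < p → δ ≤ lam s - lam (s + 1))
    {j k : ℕ} (hj : j ∈ Finset.Icc r s) (hk : k ∈ Finset.Icc 1 p \ Finset.Icc r s) :
    δ ≤ |lam j - lam k| := by
  simp only [AntitoneOn, Finset.coe_Icc, Set.mem_Icc] at hlam
  simp only [Finset.mem_sdiff, Finset.mem_Icc] at hj hk
  rcases lt_or_ge k r with hkr | hkr
  · have hk_left : lam (r - 1) ≤ lam k := hlam (by omega) (by omega) (by omega)
    have hj_right : lam j ≤ lam r := hlam (by omega) (by omega) (by omega)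
    rw [abs_sub_comm]
    exact le_abs.mpr (.inl (by linarith [hgapL (by omega)]))
  · have hj_left : lam s ≤ lam j := hlam (by omega) (by omega) (by omega)
    have hk_right : lam k ≤ lam (s + 1) := hlam (by omega) (by omega) (by omega)
    exact le_abs.mpr (.inl (by linarith [hgapR (by omega)]))

/-- **Davis–Kahan `sin Θ` bound (Yu–Wang–Samworth variant), Proposition 2 of the paper.**
`Σ, Σ̂` are symmetric `p × p` real matrices; `lam 1 ≥ … ≥ lam p` are the eigenvalues of `Σ`
(realized by the orthonormal eigenbasis `u 1, …, u p`), and `lamhat 1 ≥ … ≥ lamhat p` those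
of `Σ̂` (realized by the orthonormal eigenbasis `vhat 1, …, vhat p`).  For `1 ≤ r ≤ s ≤ p`,
`v r, …, v s` are orthonormal eigenvectors of `Σ` with `Σ v j = lam j • v j`.  The gap
`δ = min (lam (r-1) - lam r) (lam s - lam (s+1))` (with the conventions `lam 0 = ∞`,
`lam (p+1) = -∞`, encoded by the hypotheses `hgapL`, `hgapR`) is assumed positive.  Then
`‖V̂₁ᵀ V‖ ≤ 2 min(√m ‖Σ̂-Σ‖_op, ‖Σ̂-Σ‖) / δ`, where `m = s - r + 1` and
`‖V̂₁ᵀ V‖² = ∑_{j ∈ [1,p] \ [r,s]} ∑_{k ∈ [r,s]} (vhat j ⬝ᵥ v k)²`. -/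
theorem stmt3 (p : ℕ) (hp : 1 ≤ p)
    (Sig Sighat : Matrix (Fin p) (Fin p) ℝ)
    (hSig : Sig.IsSymm) (hSighat : Sighat.IsSymm)
    (lam lamhat : ℕ → ℝ)
    (u v vhat : ℕ → Fin p → ℝ)
    (hlam_anti : ∀ i j, 1 ≤ i → i ≤ j → j ≤ p → lam j ≤ lam i)
    (hlamhat_anti : ∀ i j, 1 ≤ i → i ≤ j → j ≤ p → lamhat j ≤ lamhat i)
    (hu_orth : ∀ i ∈ Finset.Icc 1 p, ∀ j ∈ Finset.Icc 1 p,
      u i ⬝ᵥ u j = if i = j then (1 : ℝ) else 0)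
    (hu_eig : ∀ j ∈ Finset.Icc 1 p, Sig *ᵥ u j = lam j • u j)
    (hvhat_orth : ∀ i ∈ Finset.Icc 1 p, ∀ j ∈ Finset.Icc 1 p,
      vhat i ⬝ᵥ vhat j = if i = j then (1 : ℝ) else 0)
    (hvhat_eig : ∀ j ∈ Finset.Icc 1 p, Sighat *ᵥ vhat j = lamhat j • vhat j)
    (r s : ℕ) (hr : 1 ≤ r) (hrs : r ≤ s) (hsp : s ≤ p)
    (hv_orth : ∀ i ∈ Finset.Icc r s, ∀ j ∈ Finset.Icc r s,
      v i ⬝ᵥ v j = if i = j then (1 : ℝ) else 0)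
    (hv_eig : ∀ j ∈ Finset.Icc r s, Sig *ᵥ v j = lam j • v j)
    (δ : ℝ) (hδ : 0 < δ)
    (hgapL : 2 ≤ r → δ ≤ lam (r - 1) - lam r)
    (hgapR : s < p → δ ≤ lam s - lam (s + 1)) :
    Real.sqrt (∑ j ∈ Finset.Icc 1 p \ Finset.Icc r s, ∑ k ∈ Finset.Icc r s,
        (vhat j ⬝ᵥ v k) ^ 2)
      ≤ 2 * min (Real.sqrt ((s - r + 1 : ℕ) : ℝ) * opNormR (Sighat - Sig))
          (frobNormR (Sighat - Sig)) / δ := by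
  have hlam : AntitoneOn lam (Finset.Icc 1 p) := fun i hi j hj hij =>
    hlam_anti i j (Finset.mem_Icc.mp hi).1 hij (Finset.mem_Icc.mp hj).2
  have hlamhat : AntitoneOn lamhat (Finset.Icc 1 p) := fun i hi j hj hij =>
    hlamhat_anti i j (Finset.mem_Icc.mp hi).1 hij (Finset.mem_Icc.mp hj).2
  have hbound := stmt3_general (toEuclideanCLM (𝕜 := ℝ) Sig) (toEuclideanCLM (𝕜 := ℝ) Sighat)
    (Finset.Icc 1 p) (Finset.Icc r s) (by simp) (Finset.Icc_subset_Icc hr hsp) lam lamhat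
    (hlam.monovaryOn hlamhat)
    (fun j => WithLp.toLp 2 (u j)) (fun j => WithLp.toLp 2 (v j)) (fun j => WithLp.toLp 2 (vhat j))
    (orthonormal_toLp hu_orth) (fun j hj => toEuclideanCLM_toLp_eq_smul (hu_eig j hj))
    (orthonormal_toLp hvhat_orth) (fun j hj => toEuclideanCLM_toLp_eq_smul (hvhat_eig j hj))
    (orthonormal_toLp hv_orth) (fun j hj => toEuclideanCLM_toLp_eq_smul (hv_eig j hj))
    δ hδ (fun j hj k hk => le_abs_sub_of_antitoneOn hlam hr hsp hgapL hgapR hj hk)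
    (EuclideanSpace.basisFun (Fin p) ℝ)
  rw [opNormR_eq_norm_toEuclideanCLM, frobNormR_eq_sqrt_sum_sq_norm, map_sub,
    ← Nat.sub_add_comm hrs, ← Nat.card_Icc]
  simpa only [EuclideanSpace.inner_toLp_toLp, star_trivial, Real.norm_eq_abs, sq_abs,
    dotProduct_comm (v _)] using hbound
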